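/- (Continuous Poisson problem.) Let 0<α<1 and 0<s<1 with α+2s<1. Let F:ℝ→ℝ be α-Hölder continuous with compact support contained in (−R₀,R₀), R₀>0, and define U(x) = A_{-s}·∫_ℝ F(y)/|x−y|^{1−2s} dy. Then: (1) U is bounded and U(x)→0 as |x|→∞; (2) U is (α+2s)-Hölder continuous and ‖U‖_{L^∞} + [U]_{C^{0,α+2s}} ≤ C·(‖F‖_{L^∞}+[F]_{C^{0,α}}) with C depending only on s, α and R₀; (3) for every x∈ℝ the integral A_s·∫_ℝ (U(x)−U(y))/|x−y|^{1+2s} dy converges absolutely and equals F(x). -/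

import Mathlib

open MeasureTheory

/-- The normalizing constant `A_s = 4^s Γ(1/2+s)/(√π |Γ(-s)|)`, with `|Γ(-s)| = Γ(1-s)/s`. -/
noncomputable def As (s : ℝ) : ℝ :=
  (4 : ℝ) ^ s * Real.Gamma (1/2 + s) / (Real.sqrt Real.pi * (Real.Gamma (1 - s) / s))

/-- The normalizing constant `A_{-s} = 4^{-s} Γ(1/2-s)/(√π Γ(s))`. -/
noncomputable def Ans (s : ℝ) : ℝ :=
  (4 : ℝ) ^ (-s) * Real.Gamma (1/2 - s) / (Real.sqrt Real.pi * Real.Gamma s)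

/-- The candidate solution `U = (-Δ)^{-s}F`: `U(x) = A_{-s} ∫_ℝ F(y)/|x-y|^{1-2s} dy`. -/
noncomputable def Usol (s : ℝ) (F : ℝ → ℝ) (x : ℝ) : ℝ :=
  Ans s * ∫ y : ℝ, F y / |x - y| ^ (1 - 2 * s)

/-!
Write `P_t` for the heat semigroup. Subordination, i.e. the Gamma integral
`∫ t ^ (-1 - σ) * heatKernel t r dt = c_σ |r| ^ (-1 - 2σ)`, taken with `σ = -s` and `σ = s`,
expresses the two kernels of the problem through `P_t`:

  `Γ(s) U(x) = ∫ P_τ F(x) τ ^ (s - 1) dτ`,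
  `c_s ∫ (U(x) - U(y)) |x - y| ^ (-1 - 2s) dy = ∫ t ^ (-1 - s) (U(x) - P_t U(x)) dt`.

By the semigroup law `Γ(s) P_t U(x) = ∫ P_{τ + t} F(x) τ ^ (s - 1) dτ`. So for fixed `x` the first
formula is a Weyl fractional integral of the one-variable function `p(τ) = P_τ F(x)` and the second
is its Marchaud derivative, which gives back `p(0) = F(x)`. Truncating the Marchaud integral to
`t > ε` yields a mean of `p(ε ·)` against a fixed integrable kernel; letting `ε → 0` proves the
inversion up to the mass of that kernel, which is found by testing on `p(τ) = exp (-τ)`.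

Boundedness and decay of `U` follow from `|P_τ F| ≤ C min(1, τ ^ (-1/2))`. For the Hölder estimate,
the difference of two translates of the Riesz kernel has integral zero, so `F` may be replaced by
`F - F(x)`, and scaling produces the factor `|x - y| ^ (α + 2s)`.
-/

section PoissonProblem

open Set Filter Topology Real ProbabilityTheory

/-- The function equal to `r ^ a` for `r < 1` and to `r ^ b` for `r ≥ 1`, used as an integrable
majorant of functions whose singularity at `0` and decay at infinity have different orders. -/
noncomputable def splitRpow (a b r : ℝ) : ℝ := if r < 1 then r ^ a else r ^ b

section SplitRpow

variable {a b r : ℝ}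

lemma splitRpow_nonneg (hr : 0 ≤ r) : 0 ≤ splitRpow a b r := by
  unfold splitRpow; split_ifs <;> positivity

lemma rpow_mul_splitRpow (c : ℝ) (hr : 0 < r) :
    r ^ c * splitRpow a b r = splitRpow (c + a) (c + b) r := by
  unfold splitRpow; split_ifs <;> rw [rpow_add hr]

lemma antitoneOn_splitRpow_zero (hb : b ≤ 0) : AntitoneOn (splitRpow 0 b) (Ici 0) := by
  intro r _ r' _ hrr'
  unfold splitRpow
  split_ifs with h' h h
  · simp
  · exact absurd (hrr'.trans_lt h') h
  · rw [rpow_zero]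
    exact rpow_le_one_of_one_le_of_nonpos (not_lt.1 h') hb
  · exact rpow_le_rpow_of_nonpos (one_pos.trans_le (not_lt.1 h)) hrr' hb

lemma rpow_le_splitRpow_add_one {c : ℝ} (hr : 0 ≤ r) (hc : c ≤ 0) :
    r ^ c ≤ splitRpow c b r + 1 := by
  unfold splitRpow
  split_ifs with h
  · linarith
  · linarith [rpow_le_one_of_one_le_of_nonpos (not_lt.1 h) hc, rpow_nonneg hr b]

lemma integrableOn_splitRpow (ha : -1 < a) (hb : b < -1) :
    IntegrableOn (splitRpow a b) (Ioi 0) := by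
  rw [← Ioo_union_Ici_eq_Ioi zero_lt_one]
  refine IntegrableOn.union ?_ ((integrableOn_Ici_iff_integrableOn_Ioi).2 ?_)
  · exact ((intervalIntegral.integrableOn_Ioo_rpow_iff zero_lt_one).2 ha).congr_fun
      (fun r hr => (if_pos hr.2).symm) measurableSet_Ioo
  · exact (integrableOn_Ioi_rpow_of_lt hb zero_lt_one).congr_fun
      (fun r hr => (if_neg (not_lt.2 (mem_Ioi.1 hr).le)).symm) measurableSet_Ioi

lemma integrable_splitRpow_abs_sub (ha : -1 < a) (hb : b < -1) (x : ℝ) :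
    Integrable (fun y => splitRpow a b |x - y|) := by
  have h : Integrable (fun y : ℝ => splitRpow a b ‖y‖) := by
    rw [integrable_fun_norm_addHaar volume]
    simpa using integrableOn_splitRpow ha hb
  exact h.comp_sub_left x

end SplitRpow

/-- The Weyl fractional integral `∫₀^∞ p(τ + t) τ^{s-1} dτ` of order `s`, without the usual factor
`1 / Γ(s)`. -/
noncomputable def weylIntegral (s : ℝ) (p : ℝ → ℝ) (t : ℝ) : ℝ :=
  ∫ τ in Ioi (0 : ℝ), p (τ + t) * τ ^ (s - 1)

/-- The kernel `k` for which truncating the Marchaud integral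
`∫ t^{-1-s} (W(0) - W(t)) dt` of `W = weylIntegral s p` to `t > ε` gives
`s⁻¹ ∫ p(ε σ) k(σ) dσ`. -/
noncomputable def marchaudKernel (s σ : ℝ) : ℝ :=
  σ ^ (s - 1) - (Ioi 1).indicator (fun σ => σ⁻¹ * (σ - 1) ^ s) σ

section MarchaudKernel

variable {s : ℝ}

lemma rpow_sub_rpow_sub_one_le {σ : ℝ} (hs : 0 < s) (hs1 : s ≤ 1) (hσ : 1 ≤ σ) :
    σ ^ s - (σ - 1) ^ s ≤ σ ^ (s - 1) := by
  have hσ0 : 0 < σ := one_pos.trans_le hσ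
  have hw0 : 0 ≤ 1 - σ⁻¹ := sub_nonneg.2 (inv_le_one_of_one_le₀ hσ)
  have hw1 : 1 - σ⁻¹ ≤ 1 := sub_le_self _ (inv_pos.2 hσ0).le
  have hconcave : 1 - σ⁻¹ ≤ (1 - σ⁻¹) ^ s := by
    rcases hw0.eq_or_lt with h | h
    · rw [← h, zero_rpow hs.ne']
    · simpa using rpow_le_rpow_of_exponent_ge h hw1 hs1
  have hfactor : (σ - 1) ^ s = σ ^ s * (1 - σ⁻¹) ^ s := by
    rw [← mul_rpow hσ0.le hw0]
    congr 1
    field_simp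
  rw [hfactor, rpow_sub_one hσ0.ne', div_eq_mul_inv]
  nlinarith [rpow_pos_of_pos hσ0 s]

lemma abs_marchaudKernel_le {σ : ℝ} (hs : 0 < s) (hs1 : s ≤ 1) (hσ : 0 < σ) :
    |marchaudKernel s σ| ≤ splitRpow (s - 1) (s - 2) σ := by
  have hvanish : ∀ h : 1 ≤ σ, (Ioi 1).indicator (fun σ => σ⁻¹ * (σ - 1) ^ s) σ
      = σ⁻¹ * (σ - 1) ^ s := by
    intro h
    rcases h.eq_or_lt with rfl | h
    · simp [zero_rpow hs.ne']
    · exact indicator_of_mem h _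
  unfold marchaudKernel splitRpow
  split_ifs with h
  · rw [indicator_of_notMem (notMem_Ioi.2 h.le), sub_zero, abs_of_nonneg (by positivity)]
  · rw [not_lt] at h
    have hmono : (σ - 1) ^ s ≤ σ ^ s := rpow_le_rpow (by linarith) (by linarith) hs.le
    calc |σ ^ (s - 1) - (Ioi 1).indicator (fun σ => σ⁻¹ * (σ - 1) ^ s) σ|
        = σ⁻¹ * (σ ^ s - (σ - 1) ^ s) := by
          rw [hvanish h, rpow_sub_one hσ.ne', div_eq_inv_mul, ← mul_sub]
          exact abs_of_nonneg (mul_nonneg (by positivity) (sub_nonneg.2 hmono))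
      _ ≤ σ⁻¹ * σ ^ (s - 1) := by gcongr; exact rpow_sub_rpow_sub_one_le hs hs1 h
      _ = σ ^ (s - 2) := by
          rw [show s - 2 = s - 1 - 1 by ring, rpow_sub_one hσ.ne' (s - 1), div_eq_inv_mul]

lemma measurable_marchaudKernel (s : ℝ) : Measurable (marchaudKernel s) :=
  (by fun_prop : Measurable fun σ : ℝ => σ ^ (s - 1)).sub
    (Measurable.indicator (by fun_prop) measurableSet_Ioi)

lemma integrableOn_marchaudKernel (hs : 0 < s) (hs1 : s < 1) :
    IntegrableOn (marchaudKernel s) (Ioi 0) := by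
  refine (integrableOn_splitRpow (a := s - 1) (b := s - 2) (by linarith) (by linarith)).mono'
    (measurable_marchaudKernel s).aestronglyMeasurable ?_
  filter_upwards [ae_restrict_mem measurableSet_Ioi] with σ hσ
  exact abs_marchaudKernel_le hs hs1.le hσ

lemma integral_Ioo_rpow_mul_sub_rpow {a σ : ℝ} (hs : 0 < s) (ha : 0 < a) (h : a < σ) :
    ∫ t in Ioo a σ, t ^ (-1 - s) * (σ - t) ^ (s - 1) = (s * σ)⁻¹ * (a ^ (-s) * (σ - a) ^ s) := by
  have hσ : 0 < σ := ha.trans h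
  set g : ℝ → ℝ := fun t => -((s * σ)⁻¹ * (t ^ (-s) * (σ - t) ^ s)) with hg
  have hcont : ContinuousOn g (Icc a σ) := by
    refine (continuousOn_const.mul (ContinuousOn.mul ?_ ?_)).neg
    · exact continuousOn_id.rpow_const fun t ht => Or.inl (ha.trans_le ht.1).ne'
    · exact (continuousOn_const.sub continuousOn_id).rpow_const fun t _ => Or.inr hs.le
  have hderiv : ∀ t ∈ Ioo a σ, HasDerivAt g (t ^ (-1 - s) * (σ - t) ^ (s - 1)) t := by
    intro t ht
    have ht0 : 0 < t := ha.trans ht.1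
    have htσ : 0 < σ - t := sub_pos.2 ht.2
    have hleft : HasDerivAt (fun t : ℝ => t ^ (-s)) (-s * t ^ (-s - 1)) t :=
      hasDerivAt_rpow_const (Or.inl ht0.ne')
    have hright : HasDerivAt (fun t : ℝ => (σ - t) ^ s) (-1 * s * (σ - t) ^ (s - 1)) t :=
      ((hasDerivAt_id t).const_sub σ).rpow_const (Or.inl htσ.ne')
    convert! ((hleft.mul hright).const_mul ((s * σ)⁻¹)).neg using 1
    rw [show -s - 1 = -1 - s by ring, show t ^ (-s) = t ^ (-1 - s) * t by
      rw [← rpow_add_one ht0.ne']; ring_nf, rpow_sub_one htσ.ne']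
    field_simp
    ring
  have hpos : ∀ t ∈ Ioo a σ, 0 ≤ t ^ (-1 - s) * (σ - t) ^ (s - 1) := fun t ht =>
    mul_nonneg (rpow_nonneg (ha.trans ht.1).le _) (rpow_nonneg (sub_pos.2 ht.2).le _)
  have hint := intervalIntegral.integrableOn_deriv_of_nonneg hcont hderiv hpos
  rw [← integral_Ioc_eq_integral_Ioo, ← intervalIntegral.integral_of_le h.le,
    intervalIntegral.integral_eq_sub_of_hasDerivAt_of_le h.le hcont hderiv
      ((intervalIntegrable_iff_integrableOn_Ioc_of_le h.le).2 hint)]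
  simp [hg, zero_rpow hs.ne']

end MarchaudKernel

section Marchaud

lemma integral_Ioi_integral_Ioi_eq_integral_Ioo {E : Type*} [NormedAddCommGroup E]
    [NormedSpace ℝ E] {f : ℝ → ℝ → E} {a : ℝ}
    (hf : Integrable (Function.uncurry f)
      ((volume.restrict (Ioi a)).prod (volume.restrict (Ioi 0)))) :
    ∫ t in Ioi a, ∫ τ in Ioi 0, f t τ = ∫ σ in Ioi a, ∫ t in Ioo a σ, f t (σ - t) := by
  set g : ℝ → ℝ → E := fun t => (Ioi a).indicator (fun t => (Ioi 0).indicator (f t)) t with hg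
  have hg_uncurry : Function.uncurry g = (Ioi a ×ˢ Ioi 0).indicator (Function.uncurry f) := by
    ext ⟨t, τ⟩
    by_cases ht : a < t <;> by_cases hτ : 0 < τ <;> simp [hg, indicator, ht, hτ]
  have hg_int : Integrable (Function.uncurry g) (volume.prod volume) := by
    rw [hg_uncurry, integrable_indicator_iff (measurableSet_Ioi.prod measurableSet_Ioi),
      IntegrableOn, ← Measure.prod_restrict]
    exact hf
  have hshear : Integrable (Function.uncurry fun t σ => g t (-t + σ)) (volume.prod volume) :=
    (measurePreserving_prod_neg_add volume volume).integrable_comp_of_integrable hg_int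
  have hleft : ∀ t, ∫ σ, g t (-t + σ) = (Ioi a).indicator (fun t => ∫ τ in Ioi 0, f t τ) t := by
    intro t
    rw [integral_add_left_eq_self (g t) (-t)]
    by_cases ht : t ∈ Ioi a <;> simp [hg, ht, integral_indicator]
  have hright : ∀ σ, ∫ t, g t (-t + σ) = ∫ t in Ioo a σ, f t (σ - t) := by
    intro σ
    rw [← integral_indicator measurableSet_Ioo]
    congr 1 with t
    by_cases ht : a < t <;> by_cases hσ : t < σ <;> simp [hg, ht, hσ, neg_add_eq_sub]
  have hswap := integral_integral_swap hshear
  simp only [hleft, hright] at hswap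
  rw [integral_indicator measurableSet_Ioi] at hswap
  rw [hswap]
  refine (setIntegral_eq_integral_of_forall_compl_eq_zero fun σ hσ => ?_).symm
  rw [Ioo_eq_empty hσ, setIntegral_empty]

variable {s : ℝ} {p m : ℝ → ℝ}

lemma norm_weylIntegrand_le (hp : ∀ τ, 0 < τ → |p τ| ≤ m τ) (hm : AntitoneOn m (Ici 0))
    {t τ : ℝ} (ht : 0 ≤ t) (hτ : 0 < τ) :
    ‖p (τ + t) * τ ^ (s - 1)‖ ≤ m τ * τ ^ (s - 1) := by
  rw [norm_mul, norm_of_nonneg (rpow_nonneg hτ.le _)]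
  gcongr
  exact (hp _ (by linarith)).trans (hm hτ.le (add_nonneg hτ.le ht) (by linarith))

lemma integrableOn_weylIntegrand (hpm : Measurable p) (hp : ∀ τ, 0 < τ → |p τ| ≤ m τ)
    (hm : AntitoneOn m (Ici 0)) (hmi : IntegrableOn (fun τ => m τ * τ ^ (s - 1)) (Ioi 0))
    {t : ℝ} (ht : 0 ≤ t) :
    IntegrableOn (fun τ => p (τ + t) * τ ^ (s - 1)) (Ioi 0) := by
  refine hmi.mono' (Measurable.aestronglyMeasurable (by fun_prop)) ?_
  filter_upwards [ae_restrict_mem measurableSet_Ioi] with τ hτ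
  exact norm_weylIntegrand_le hp hm ht hτ

lemma integrable_prod_weylIntegrand (hs : 0 < s) (hpm : Measurable p)
    (hp : ∀ τ, 0 < τ → |p τ| ≤ m τ) (hm : AntitoneOn m (Ici 0))
    (hmi : IntegrableOn (fun τ => m τ * τ ^ (s - 1)) (Ioi 0)) {a : ℝ} (ha : 0 < a) :
    Integrable (Function.uncurry fun t τ => t ^ (-1 - s) * (p (τ + t) * τ ^ (s - 1)))
      ((volume.restrict (Ioi a)).prod (volume.restrict (Ioi 0))) := by
  have hrpow : IntegrableOn (fun t : ℝ => t ^ (-1 - s)) (Ioi a) :=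
    integrableOn_Ioi_rpow_of_lt (by linarith) ha
  refine (Integrable.mul_prod hrpow hmi).mono' (Measurable.aestronglyMeasurable (by fun_prop)) ?_
  rw [Measure.prod_restrict]
  filter_upwards [ae_restrict_mem (measurableSet_Ioi.prod measurableSet_Ioi)] with ⟨t, τ⟩ ⟨ht, hτ⟩
  have ht0 : 0 < t := ha.trans ht
  rw [Function.uncurry_apply_pair, norm_mul, norm_of_nonneg (rpow_nonneg ht0.le _)]
  exact mul_le_mul_of_nonneg_left (norm_weylIntegrand_le hp hm ht0.le hτ) (rpow_nonneg ht0.le _)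

lemma integrableOn_mul_marchaudKernel (hs : 0 < s) (hs1 : s < 1) (hpm : Measurable p)
    (hp : ∀ τ, 0 < τ → |p τ| ≤ m τ) (hm : AntitoneOn m (Ici 0)) :
    IntegrableOn (fun σ => p σ * marchaudKernel s σ) (Ioi 0) := by
  refine (integrableOn_marchaudKernel hs hs1).bdd_mul hpm.aestronglyMeasurable (c := m 0) ?_
  filter_upwards [ae_restrict_mem measurableSet_Ioi] with σ hσ
  exact (hp σ hσ).trans (hm self_mem_Ici (mem_Ici.2 (le_of_lt hσ)) (le_of_lt hσ))

lemma integral_Ioi_one_mul_weylIntegral (hs : 0 < s) (hpm : Measurable p)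
    (hp : ∀ τ, 0 < τ → |p τ| ≤ m τ) (hm : AntitoneOn m (Ici 0))
    (hmi : IntegrableOn (fun τ => m τ * τ ^ (s - 1)) (Ioi 0)) :
    ∫ t in Ioi 1, t ^ (-1 - s) * weylIntegral s p t
      = s⁻¹ * ∫ σ in Ioi 1, p σ * (σ⁻¹ * (σ - 1) ^ s) := by
  simp only [weylIntegral, ← integral_const_mul]
  rw [integral_Ioi_integral_Ioi_eq_integral_Ioo
    (integrable_prod_weylIntegrand hs hpm hp hm hmi one_pos)]
  refine setIntegral_congr_fun measurableSet_Ioi fun σ hσ => ?_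
  calc ∫ t in Ioo 1 σ, t ^ (-1 - s) * (p (σ - t + t) * (σ - t) ^ (s - 1))
      = p σ * ∫ t in Ioo 1 σ, t ^ (-1 - s) * (σ - t) ^ (s - 1) := by
        rw [← integral_const_mul]
        congr 1 with t
        rw [sub_add_cancel]
        ring
    _ = s⁻¹ * (p σ * (σ⁻¹ * (σ - 1) ^ s)) := by
        rw [integral_Ioo_rpow_mul_sub_rpow hs one_pos hσ, one_rpow, mul_inv]
        ring

lemma integral_Ioi_one_marchaud (hs : 0 < s) (hs1 : s < 1) (hpm : Measurable p)
    (hp : ∀ τ, 0 < τ → |p τ| ≤ m τ) (hm : AntitoneOn m (Ici 0))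
    (hmi : IntegrableOn (fun τ => m τ * τ ^ (s - 1)) (Ioi 0)) :
    ∫ t in Ioi 1, t ^ (-1 - s) * (weylIntegral s p 0 - weylIntegral s p t)
      = s⁻¹ * ∫ σ in Ioi 0, p σ * marchaudKernel s σ := by
  have hrpow : IntegrableOn (fun t : ℝ => t ^ (-1 - s)) (Ioi 1) :=
    integrableOn_Ioi_rpow_of_lt (by linarith) one_pos
  have hweyl : IntegrableOn (fun t => t ^ (-1 - s) * weylIntegral s p t) (Ioi 1) := by
    have := (integrable_prod_weylIntegrand hs hpm hp hm hmi one_pos).integral_prod_left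
    simpa only [IntegrableOn, weylIntegral, Function.uncurry_apply_pair, integral_const_mul]
      using this
  have hfree : IntegrableOn (fun σ => p σ * σ ^ (s - 1)) (Ioi 0) := by
    simpa using integrableOn_weylIntegrand hpm hp hm hmi le_rfl
  have hkernel := integrableOn_mul_marchaudKernel hs hs1 hpm hp hm
  have htail : ∫ σ in Ioi 1, p σ * (σ⁻¹ * (σ - 1) ^ s)
      = ∫ σ in Ioi 0, (p σ * σ ^ (s - 1) - p σ * marchaudKernel s σ) := by
    rw [← inter_eq_self_of_subset_right (Ioi_subset_Ioi zero_le_one),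
      ← setIntegral_indicator measurableSet_Ioi]
    congr 1 with σ
    rw [marchaudKernel, ← mul_sub, sub_sub_cancel, indicator_mul_right]
  simp only [mul_sub]
  rw [integral_sub (hrpow.mul_const _) hweyl, integral_mul_const,
    integral_Ioi_one_mul_weylIntegral hs hpm hp hm hmi, htail, integral_sub hfree hkernel,
    integral_Ioi_rpow_of_lt (by linarith) one_pos, one_rpow, weylIntegral]
  simp only [add_zero]
  rw [show -1 - s + 1 = -s by ring, neg_div_neg_eq, one_div]
  ring

lemma weylIntegral_mul_left {ε : ℝ} (hε : 0 < ε) (s : ℝ) (p : ℝ → ℝ) (t : ℝ) :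
    weylIntegral s p (ε * t) = ε ^ s * weylIntegral s (fun τ => p (ε * τ)) t := by
  have hsubst := integral_comp_mul_left_Ioi' (fun τ => p (τ + ε * t) * τ ^ (s - 1)) 0 hε
  rw [mul_zero, smul_eq_mul] at hsubst
  rw [weylIntegral, weylIntegral, ← hsubst, ← integral_const_mul, ← integral_const_mul]
  refine setIntegral_congr_fun measurableSet_Ioi fun τ hτ => ?_
  rw [mul_rpow hε.le (le_of_lt hτ), ← mul_add, rpow_sub_one hε.ne']
  field_simp

lemma integral_Ioi_marchaud (hs : 0 < s) (hs1 : s < 1) (hpm : Measurable p)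
    (hp : ∀ τ, 0 < τ → |p τ| ≤ m τ) (hm : AntitoneOn m (Ici 0))
    (hmi : IntegrableOn (fun τ => m τ * τ ^ (s - 1)) (Ioi 0)) {ε : ℝ} (hε : 0 < ε) :
    ∫ t in Ioi ε, t ^ (-1 - s) * (weylIntegral s p 0 - weylIntegral s p t)
      = s⁻¹ * ∫ σ in Ioi 0, p (ε * σ) * marchaudKernel s σ := by
  have hm' : AntitoneOn (fun τ => m (ε * τ)) (Ici 0) := fun τ hτ τ' hτ' h =>
    hm (mul_nonneg hε.le hτ) (mul_nonneg hε.le hτ') (mul_le_mul_of_nonneg_left h hε.le)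
  have hmi' : IntegrableOn (fun τ => m (ε * τ) * τ ^ (s - 1)) (Ioi 0) := by
    rw [← mul_zero ε, ← integrableOn_Ioi_comp_mul_left_iff _ _ hε] at hmi
    refine IntegrableOn.congr_fun (hmi.const_mul (ε ^ (1 - s))) (fun τ hτ => ?_) measurableSet_Ioi
    rw [mul_rpow hε.le (le_of_lt hτ), mul_left_comm, ← mul_assoc (ε ^ (1 - s)), ← rpow_add hε,
      sub_add_sub_cancel, sub_self, rpow_zero, one_mul]
  rw [← integral_Ioi_one_marchaud hs hs1 (by fun_prop) (fun τ hτ => hp _ (mul_pos hε hτ)) hm' hmi']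
  have hsubst := integral_comp_mul_left_Ioi'
    (fun t => t ^ (-1 - s) * (weylIntegral s p 0 - weylIntegral s p t)) 1 hε
  rw [mul_one, smul_eq_mul] at hsubst
  rw [← hsubst, ← integral_const_mul]
  refine setIntegral_congr_fun measurableSet_Ioi fun t ht => ?_
  have hzero := weylIntegral_mul_left hε s p 0
  rw [mul_zero] at hzero
  rw [hzero, weylIntegral_mul_left hε s p t, mul_rpow hε.le (one_pos.trans ht).le,
    show -1 - s = -s - 1 by ring, rpow_sub_one hε.ne', rpow_neg hε.le]
  field_simp

lemma tendsto_integral_mul_marchaudKernel (hs : 0 < s) (hs1 : s < 1) (hpm : Measurable p)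
    (hp : ∀ τ, 0 < τ → |p τ| ≤ m τ) (hm : AntitoneOn m (Ici 0))
    (hp0 : Tendsto p (𝓝[>] 0) (𝓝 (p 0))) :
    Tendsto (fun ε => ∫ σ in Ioi 0, p (ε * σ) * marchaudKernel s σ) (𝓝[>] 0)
      (𝓝 (p 0 * ∫ σ in Ioi 0, marchaudKernel s σ)) := by
  rw [← integral_const_mul]
  refine tendsto_integral_filter_of_dominated_convergence (fun σ => m 0 * |marchaudKernel s σ|)
    (Eventually.of_forall fun ε => ?_) ?_
    ((integrableOn_marchaudKernel hs hs1).abs.const_mul _) ?_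
  · have := measurable_marchaudKernel s
    exact Measurable.aestronglyMeasurable (by fun_prop)
  · filter_upwards [self_mem_nhdsWithin] with ε hε
    filter_upwards [ae_restrict_mem measurableSet_Ioi] with σ hσ
    have hεσ : 0 < ε * σ := mul_pos hε hσ
    rw [norm_mul]
    exact mul_le_mul_of_nonneg_right ((hp _ hεσ).trans (hm self_mem_Ici hεσ.le hεσ.le))
      (norm_nonneg _)
  · filter_upwards [ae_restrict_mem measurableSet_Ioi] with σ hσ
    refine (hp0.comp (tendsto_nhdsWithin_iff.2 ⟨?_, ?_⟩)).mul_const _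
    · exact (Continuous.tendsto' (by fun_prop) 0 0 (zero_mul σ)).mono_left nhdsWithin_le_nhds
    · filter_upwards [self_mem_nhdsWithin] with ε hε using mul_pos (mem_Ioi.1 hε) hσ

lemma integral_marchaud_eq_mul_integral_marchaudKernel (hs : 0 < s) (hs1 : s < 1)
    (hpm : Measurable p) (hp : ∀ τ, 0 < τ → |p τ| ≤ m τ) (hm : AntitoneOn m (Ici 0))
    (hmi : IntegrableOn (fun τ => m τ * τ ^ (s - 1)) (Ioi 0))
    (hp0 : Tendsto p (𝓝[>] 0) (𝓝 (p 0)))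
    (hint : IntegrableOn (fun t => t ^ (-1 - s) * (weylIntegral s p 0 - weylIntegral s p t))
      (Ioi 0)) :
    ∫ t in Ioi 0, t ^ (-1 - s) * (weylIntegral s p 0 - weylIntegral s p t)
      = s⁻¹ * (p 0 * ∫ σ in Ioi 0, marchaudKernel s σ) := by
  have htrunc := (aecover_Ioi_of_Ioi (μ := volume)
    (tendsto_id.mono_right nhdsWithin_le_nhds : Tendsto id (𝓝[>] (0 : ℝ)) (𝓝 0))
    ).integral_tendsto_of_countably_generated hint
  refine tendsto_nhds_unique (htrunc.congr' ?_)
    ((tendsto_integral_mul_marchaudKernel hs hs1 hpm hp hm hp0).const_mul s⁻¹)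
  filter_upwards [self_mem_nhdsWithin] with ε hε
  have hsub : Ioi ε ⊆ Ioi 0 := Ioi_subset_Ioi (le_of_lt hε)
  rw [id, Measure.restrict_restrict_of_subset hsub, integral_Ioi_marchaud hs hs1 hpm hp hm hmi hε]

lemma abs_one_sub_exp_neg_le_self {t : ℝ} (ht : 0 ≤ t) : |1 - exp (-t)| ≤ t := by
  rw [abs_of_nonneg (sub_nonneg.2 (exp_le_one_iff.2 (by linarith)))]
  linarith [add_one_le_exp (-t)]

lemma abs_one_sub_exp_neg_le_one {t : ℝ} (ht : 0 ≤ t) : |1 - exp (-t)| ≤ 1 := by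
  rw [abs_of_nonneg (sub_nonneg.2 (exp_le_one_iff.2 (by linarith)))]
  linarith [exp_pos (-t)]

lemma integrableOn_one_sub_exp_neg_mul_rpow (hs : 0 < s) (hs1 : s < 1) :
    IntegrableOn (fun t : ℝ => (1 - exp (-t)) * t ^ (-1 - s)) (Ioi 0) := by
  refine (integrableOn_splitRpow (a := 1 + (-1 - s)) (b := -1 - s) (by linarith)
    (by linarith)).mono' (Measurable.aestronglyMeasurable (by fun_prop)) ?_
  filter_upwards [ae_restrict_mem measurableSet_Ioi] with t (ht : 0 < t)
  have hrpow := rpow_nonneg ht.le (-1 - s)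
  rw [norm_mul, norm_of_nonneg hrpow, splitRpow]
  split_ifs
  · rw [rpow_add ht, rpow_one]
    exact mul_le_mul_of_nonneg_right (abs_one_sub_exp_neg_le_self ht.le) hrpow
  · exact mul_le_of_le_one_left hrpow (abs_one_sub_exp_neg_le_one ht.le)

lemma tendsto_one_sub_exp_neg_mul_rpow_zero (hs1 : s < 1) :
    Tendsto (fun t : ℝ => (1 - exp (-t)) * t ^ (-s)) (𝓝[>] 0) (𝓝 0) := by
  have hpow : Tendsto (fun t : ℝ => t ^ (1 - s)) (𝓝[>] 0) (𝓝 0) :=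
    ((continuous_rpow_const (by linarith)).tendsto' 0 0
      (zero_rpow (by linarith))).mono_left nhdsWithin_le_nhds
  refine squeeze_zero_norm' ?_ hpow
  filter_upwards [self_mem_nhdsWithin] with t (ht : 0 < t)
  rw [norm_mul, norm_of_nonneg (rpow_nonneg ht.le _), sub_eq_add_neg 1 s, rpow_add ht, rpow_one]
  exact mul_le_mul_of_nonneg_right (abs_one_sub_exp_neg_le_self ht.le) (rpow_nonneg ht.le _)

lemma tendsto_one_sub_exp_neg_mul_rpow_atTop (hs : 0 < s) :
    Tendsto (fun t : ℝ => (1 - exp (-t)) * t ^ (-s)) atTop (𝓝 0) := by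
  refine squeeze_zero_norm' ?_ (tendsto_rpow_neg_atTop hs)
  filter_upwards [eventually_ge_atTop 0] with t ht
  rw [norm_mul, norm_of_nonneg (rpow_nonneg ht _)]
  exact mul_le_of_le_one_left (rpow_nonneg ht _) (abs_one_sub_exp_neg_le_one ht)

lemma integral_one_sub_exp_neg_mul_rpow (hs : 0 < s) (hs1 : s < 1) :
    ∫ t in Ioi 0, (1 - exp (-t)) * t ^ (-1 - s) = Gamma (1 - s) / s := by
  have hu : ∀ t ∈ Ioi (0 : ℝ), HasDerivAt (fun t => 1 - exp (-t)) (exp (-t)) t := fun t _ => by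
    simpa using ((hasDerivAt_id t).neg.exp).const_sub 1
  have hv : ∀ t ∈ Ioi (0 : ℝ), HasDerivAt (fun t => -s⁻¹ * t ^ (-s)) (t ^ (-1 - s)) t := by
    intro t ht
    convert! (hasDerivAt_rpow_const (p := -s) (Or.inl (ne_of_gt ht))).const_mul (-s⁻¹) using 1
    rw [show -s - 1 = -1 - s by ring]
    field_simp
  have hu'v : IntegrableOn (fun t : ℝ => exp (-t) * (-s⁻¹ * t ^ (-s))) (Ioi 0) := by
    refine ((GammaIntegral_convergent (s := 1 - s) (by linarith)).const_mul (-s⁻¹)).congr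
      (Eventually.of_forall fun t => ?_)
    simp only [sub_sub_cancel_left]
    ring
  have hzero : Tendsto (fun t : ℝ => (1 - exp (-t)) * (-s⁻¹ * t ^ (-s))) (𝓝[>] 0) (𝓝 0) := by
    simpa only [mul_left_comm, mul_zero] using
      (tendsto_one_sub_exp_neg_mul_rpow_zero hs1).const_mul (-s⁻¹)
  have hinfty : Tendsto (fun t : ℝ => (1 - exp (-t)) * (-s⁻¹ * t ^ (-s))) atTop (𝓝 0) := by
    simpa only [mul_left_comm, mul_zero] using
      (tendsto_one_sub_exp_neg_mul_rpow_atTop hs).const_mul (-s⁻¹)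
  rw [integral_Ioi_mul_deriv_eq_deriv_mul hu hv
    (integrableOn_one_sub_exp_neg_mul_rpow hs hs1) hu'v hzero hinfty,
    Gamma_eq_integral (by linarith), sub_self, zero_sub, ← integral_neg, div_eq_inv_mul,
    ← integral_const_mul]
  refine integral_congr_ae (Eventually.of_forall fun t => ?_)
  simp only [sub_sub_cancel_left]
  ring

lemma weylIntegral_exp_neg (hs : 0 < s) (t : ℝ) :
    weylIntegral s (fun τ => exp (-τ)) t = exp (-t) * Gamma s := by
  rw [weylIntegral, Gamma_eq_integral hs, ← integral_const_mul]
  congr 1 with τ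
  rw [neg_add, exp_add]
  ring

-- Both sides of the inversion formula are explicit for `p τ = exp (-τ)`.
lemma integral_marchaudKernel (hs : 0 < s) (hs1 : s < 1) :
    ∫ σ in Ioi 0, marchaudKernel s σ = Gamma s * Gamma (1 - s) := by
  have hmarchaud : ∀ t : ℝ, t ^ (-1 - s) * (weylIntegral s (fun τ => exp (-τ)) 0
      - weylIntegral s (fun τ => exp (-τ)) t) = Gamma s * ((1 - exp (-t)) * t ^ (-1 - s)) := by
    intro t
    rw [weylIntegral_exp_neg hs, weylIntegral_exp_neg hs, neg_zero, exp_zero]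
    ring
  have h := integral_marchaud_eq_mul_integral_marchaudKernel (p := fun τ => exp (-τ))
    (m := fun τ => exp (-τ)) hs hs1 (by fun_prop) (fun τ _ => (abs_of_pos (exp_pos _)).le)
    (fun τ _ τ' _ h => exp_le_exp.2 (neg_le_neg h)) (GammaIntegral_convergent hs)
    (Continuous.continuousWithinAt (by fun_prop))
    (by simp only [hmarchaud]; exact (integrableOn_one_sub_exp_neg_mul_rpow hs hs1).const_mul _)
  simp only [hmarchaud] at h
  rw [integral_const_mul, integral_one_sub_exp_neg_mul_rpow hs hs1, neg_zero, exp_zero,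
    one_mul] at h
  field_simp at h
  exact h.symm

lemma integral_marchaud (hs : 0 < s) (hs1 : s < 1) (hpm : Measurable p)
    (hp : ∀ τ, 0 < τ → |p τ| ≤ m τ) (hm : AntitoneOn m (Ici 0))
    (hmi : IntegrableOn (fun τ => m τ * τ ^ (s - 1)) (Ioi 0))
    (hp0 : Tendsto p (𝓝[>] 0) (𝓝 (p 0)))
    (hint : IntegrableOn (fun t => t ^ (-1 - s) * (weylIntegral s p 0 - weylIntegral s p t))
      (Ioi 0)) :
    ∫ t in Ioi 0, t ^ (-1 - s) * (weylIntegral s p 0 - weylIntegral s p t)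
      = Gamma s * (Gamma (1 - s) / s) * p 0 := by
  rw [integral_marchaud_eq_mul_integral_marchaudKernel hs hs1 hpm hp hm hmi hp0 hint,
    integral_marchaudKernel hs hs1]
  ring

end Marchaud

/-- The heat kernel `(4πt)^{-1/2} exp(-z²/4t)` on `ℝ`, the fundamental solution of
`∂ₜ u = ∂ₓₓ u`. -/
noncomputable def heatKernel (t z : ℝ) : ℝ := (√(4 * π * t))⁻¹ * exp (-z ^ 2 / (4 * t))

/-- The heat semigroup `P_t F` on `ℝ`, written as an average of `F` over a Gaussian of variance
`2t` centred at `x`, so that `P_0 F = F` and no heat kernel at `t = 0` is needed. -/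
noncomputable def heatSemigroup (F : ℝ → ℝ) (t x : ℝ) : ℝ :=
  ∫ w, F (x + √(2 * t) * w) ∂gaussianReal 0 1

section HeatSemigroup

lemma heatKernel_nonneg (t z : ℝ) : 0 ≤ heatKernel t z := by unfold heatKernel; positivity

lemma measurable_heatKernel : Measurable (Function.uncurry heatKernel) := by
  unfold heatKernel Function.uncurry; fun_prop

lemma heatKernel_le_rpow {t : ℝ} (ht : 0 < t) (z : ℝ) : heatKernel t z ≤ t ^ (-1 / 2 : ℝ) := by
  have hexp : exp (-z ^ 2 / (4 * t)) ≤ 1 := by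
    rw [exp_le_one_iff, neg_div, neg_nonpos]
    positivity
  calc heatKernel t z ≤ (√(4 * π * t))⁻¹ := mul_le_of_le_one_right (by positivity) hexp
    _ ≤ (√t)⁻¹ := by
        gcongr
        nlinarith [pi_gt_three]
    _ = t ^ (-1 / 2 : ℝ) := by rw [sqrt_eq_rpow, neg_div, rpow_neg ht.le]

variable {F : ℝ → ℝ} {M t τ : ℝ}

lemma heatSemigroup_zero (F : ℝ → ℝ) (x : ℝ) : heatSemigroup F 0 x = F x := by
  simp [heatSemigroup]

lemma heatSemigroup_eq_integral_gaussianReal (hF : Measurable F) (ht : 0 ≤ t) (x : ℝ) :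
    heatSemigroup F t x = ∫ y, F y ∂gaussianReal x (2 * t).toNNReal := by
  have hvar : NNReal.mk (√(2 * t) ^ 2) (sq_nonneg _) * 1 = (2 * t).toNNReal := by
    ext
    rw [mul_one, coe_toNNReal _ (by positivity)]
    exact sq_sqrt (by positivity)
  have hmap : (gaussianReal 0 1).map (fun w => x + √(2 * t) * w)
      = gaussianReal x (2 * t).toNNReal := by
    have h := gaussianReal_map_const_add (μ := √(2 * t) * 0)
      (v := NNReal.mk (√(2 * t) ^ 2) (sq_nonneg _) * 1) x
    rw [← gaussianReal_map_const_mul, Measure.map_map (by fun_prop) (by fun_prop), hvar,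
      mul_zero, zero_add] at h
    exact h
  rw [heatSemigroup, ← hmap, integral_map (by fun_prop) hF.aestronglyMeasurable]

lemma heatSemigroup_eq_integral_heatKernel (hF : Measurable F) (ht : 0 < t) (x : ℝ) :
    heatSemigroup F t x = ∫ y, heatKernel t (x - y) * F y := by
  have hvar : (2 * t).toNNReal ≠ 0 := (toNNReal_pos.2 (by positivity)).ne'
  rw [heatSemigroup_eq_integral_gaussianReal hF ht.le, integral_gaussianReal_eq_integral_smul hvar]
  congr 1 with y
  rw [smul_eq_mul, gaussianPDFReal, heatKernel, coe_toNNReal _ (by positivity), sub_sq_comm y x]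
  ring_nf

lemma measurable_heatSemigroup (hF : Measurable F) :
    Measurable (Function.uncurry (heatSemigroup F)) := by
  refine StronglyMeasurable.measurable (StronglyMeasurable.integral_prod_right'
    (f := fun z : (ℝ × ℝ) × ℝ => F (z.1.2 + √(2 * z.1.1) * z.2)) ?_)
  exact Measurable.stronglyMeasurable (by fun_prop)

lemma tendsto_heatSemigroup_zero (hF : Continuous F) (hM : ∀ x, |F x| ≤ M) (x : ℝ) :
    Tendsto (fun t => heatSemigroup F t x) (𝓝 0) (𝓝 (heatSemigroup F 0 x)) := by
  refine Continuous.tendsto (continuous_of_dominated (bound := fun _ => M) (fun t => ?_)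
    (fun t => Eventually.of_forall fun w => hM _) (integrable_const M)
    (Eventually.of_forall fun w => by fun_prop)) 0
  exact Continuous.aestronglyMeasurable (by fun_prop)

lemma abs_heatSemigroup_le (hM : ∀ x, |F x| ≤ M) (t x : ℝ) : |heatSemigroup F t x| ≤ M := by
  simpa [heatSemigroup] using norm_integral_le_of_norm_le_const (μ := gaussianReal 0 1)
    (f := fun w => F (x + √(2 * t) * w)) (Eventually.of_forall fun w => hM (x + √(2 * t) * w))

lemma abs_heatSemigroup_le_rpow (hF : Measurable F) (hFi : Integrable F) (ht : 0 < t) (x : ℝ) :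
    |heatSemigroup F t x| ≤ (∫ y, |F y|) * t ^ (-1 / 2 : ℝ) := by
  rw [heatSemigroup_eq_integral_heatKernel hF ht, mul_comm, ← integral_const_mul,
    ← norm_eq_abs]
  refine norm_integral_le_of_norm_le (hFi.abs.const_mul _) (Eventually.of_forall fun y => ?_)
  rw [norm_mul, norm_of_nonneg (heatKernel_nonneg _ _)]
  exact mul_le_mul_of_nonneg_right (heatKernel_le_rpow ht _) (abs_nonneg _)

lemma abs_heatSemigroup_le_splitRpow (hF : Measurable F) (hFi : Integrable F)
    (hM : ∀ x, |F x| ≤ M) (ht : 0 < t) (x : ℝ) :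
    |heatSemigroup F t x| ≤ (M + ∫ y, |F y|) * splitRpow 0 (-1 / 2) t := by
  have hM0 : 0 ≤ M := (abs_nonneg _).trans (hM 0)
  have hI0 : 0 ≤ ∫ y, |F y| := integral_nonneg fun _ => abs_nonneg _
  unfold splitRpow
  split_ifs
  · rw [rpow_zero, mul_one]
    exact (abs_heatSemigroup_le hM t x).trans (le_add_of_nonneg_right hI0)
  · refine (abs_heatSemigroup_le_rpow hF hFi ht x).trans ?_
    gcongr
    exact le_add_of_nonneg_left hM0

lemma tendsto_heatKernel_cocompact (ht : 0 < t) : Tendsto (heatKernel t) (cocompact ℝ) (𝓝 0) := by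
  have hsq : Tendsto (fun z : ℝ => z ^ 2 / (4 * t)) (cocompact ℝ) atTop := by
    refine Tendsto.atTop_div_const (by positivity) ?_
    simpa only [Function.comp_def, norm_eq_abs, sq_abs] using
      (tendsto_pow_atTop two_ne_zero).comp (tendsto_norm_cocompact_atTop (E := ℝ))
  have hexp := (tendsto_exp_neg_atTop_nhds_zero.comp hsq).const_mul (√(4 * π * t))⁻¹
  rw [mul_zero] at hexp
  refine hexp.congr fun z => ?_
  rw [Function.comp_apply, ← neg_div, heatKernel]

lemma isCountablyGenerated_cocompact_real : (cocompact ℝ).IsCountablyGenerated := by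
  rw [cocompact_eq_atBot_atTop]
  infer_instance

lemma tendsto_heatSemigroup_cocompact (hF : Measurable F) (hFi : Integrable F) (ht : 0 < t) :
    Tendsto (heatSemigroup F t) (cocompact ℝ) (𝓝 0) := by
  have := isCountablyGenerated_cocompact_real
  have hlim : Tendsto (fun x => ∫ y, heatKernel t (x - y) * F y) (cocompact ℝ)
      (𝓝 (∫ _ : ℝ, (0 : ℝ))) := by
    refine tendsto_integral_filter_of_dominated_convergence (fun y => t ^ (-1 / 2 : ℝ) * |F y|)
      (Eventually.of_forall fun x => ?_) (Eventually.of_forall fun x => ?_)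
      (hFi.abs.const_mul _) (Eventually.of_forall fun y => ?_)
    · have := measurable_heatKernel.comp (by fun_prop : Measurable fun y : ℝ => (t, x - y))
      exact (this.mul hF).aestronglyMeasurable
    · refine Eventually.of_forall fun y => ?_
      rw [norm_mul, norm_of_nonneg (heatKernel_nonneg _ _)]
      exact mul_le_mul_of_nonneg_right (heatKernel_le_rpow ht _) (abs_nonneg _)
    · have hshift : Tendsto (fun x => x - y) (cocompact ℝ) (cocompact ℝ) :=
        (Homeomorph.subRight y).isClosedEmbedding.tendsto_cocompact
      simpa using ((tendsto_heatKernel_cocompact ht).comp hshift).mul_const (F y)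
  rw [integral_zero] at hlim
  exact hlim.congr fun x => (heatSemigroup_eq_integral_heatKernel hF ht x).symm

lemma heatSemigroup_heatSemigroup (hF : Measurable F) (hM : ∀ x, |F x| ≤ M) (ht : 0 ≤ t)
    (hτ : 0 ≤ τ) (x : ℝ) :
    heatSemigroup (heatSemigroup F τ) t x = heatSemigroup F (τ + t) x := by
  have hmeas : Measurable (heatSemigroup F τ) := (measurable_heatSemigroup hF).of_uncurry_left
  have hvar : (2 * t).toNNReal + (2 * τ).toNNReal = (2 * (τ + t)).toNNReal := by
    rw [← toNNReal_add (by positivity) (by positivity)]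
    ring_nf
  have hconv := gaussianReal_conv_gaussianReal (m₁ := x) (m₂ := 0) (v₁ := (2 * t).toNNReal)
    (v₂ := (2 * τ).toNNReal)
  rw [hvar, add_zero] at hconv
  rw [heatSemigroup_eq_integral_gaussianReal hF (by positivity), ← hconv, integral_conv,
    heatSemigroup_eq_integral_gaussianReal hmeas ht]
  · congr 1 with y
    rw [heatSemigroup_eq_integral_gaussianReal hF hτ, ← add_zero y, add_comm y 0,
      ← gaussianReal_map_const_add, integral_map (by fun_prop) hF.aestronglyMeasurable,
      add_comm 0 y, add_zero]
  · rw [hconv]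
    exact Integrable.of_bound hF.aestronglyMeasurable M (Eventually.of_forall hM)

lemma heatSemigroup_const_sub (c : ℝ) (hF : Measurable F) (hM : ∀ x, |F x| ≤ M) (t x : ℝ) :
    heatSemigroup (fun y => c - F y) t x = c - heatSemigroup F t x := by
  have hint : Integrable (fun w => F (x + √(2 * t) * w)) (gaussianReal 0 1) :=
    Integrable.of_bound (Measurable.aestronglyMeasurable (by fun_prop)) M
      (Eventually.of_forall fun w => hM _)
  rw [heatSemigroup, integral_sub (integrable_const _) hint]
  simp [heatSemigroup]

end HeatSemigroup

/-- The constant in the subordination formula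
`∫₀^∞ t^{-1-σ} heatKernel t r dt = subordinationConst σ * |r|^{-1-2σ}`. -/
noncomputable def subordinationConst (σ : ℝ) : ℝ := 4 ^ σ * Gamma (1 / 2 + σ) / √π

section Subordination

variable {σ : ℝ}

lemma subordinationConst_pos (hσ : -1 / 2 < σ) : 0 < subordinationConst σ := by
  have := Gamma_pos_of_pos (by linarith : 0 < 1 / 2 + σ)
  unfold subordinationConst
  positivity

lemma heatKernel_eq_mul_rpow_mul_exp {t : ℝ} (ht : 0 < t) (r : ℝ) :
    heatKernel t r = (√(4 * π))⁻¹ * t ^ (-1 / 2 : ℝ) * exp (-(r ^ 2 / 4 * t ^ (-1 : ℝ))) := by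
  rw [heatKernel, sqrt_mul (by positivity), mul_inv, neg_div 2 1, rpow_neg ht.le, ← sqrt_eq_rpow,
    rpow_neg_one, neg_div]
  congr 3
  field_simp

-- The substitution `t ↦ t⁻¹` turns the integral into an Euler integral for `Γ(1/2 + σ)`.
lemma integral_rpow_mul_heatKernel (hσ : -1 / 2 < σ) {r : ℝ} (hr : r ≠ 0) :
    ∫ t in Ioi 0, t ^ (-1 - σ) * heatKernel t r = subordinationConst σ * |r| ^ (-1 - 2 * σ) := by
  have heuler := integral_rpow_mul_exp_neg_mul_Ioi (a := 1 / 2 + σ) (r := r ^ 2 / 4) (by linarith)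
    (by positivity)
  rw [← integral_comp_rpow_Ioi _ (neg_ne_zero.2 one_ne_zero)] at heuler
  have hpow : (1 / (r ^ 2 / 4)) ^ (1 / 2 + σ) = 4 ^ (1 / 2 + σ) * |r| ^ (-1 - 2 * σ) := by
    rw [one_div_div, div_rpow (by norm_num) (by positivity), ← sq_abs, ← rpow_natCast,
      ← rpow_mul (abs_nonneg r), div_eq_mul_inv, ← rpow_neg (abs_nonneg r)]
    congr 2
    push_cast
    ring
  have hsqrt : (√(4 * π))⁻¹ * 4 ^ (1 / 2 + σ) = 4 ^ σ / √π := by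
    have hfour : (4 : ℝ) ^ (1 / 2 : ℝ) = √4 := (sqrt_eq_rpow 4).symm
    rw [sqrt_mul (by norm_num), rpow_add (by norm_num), hfour]
    field_simp
  calc ∫ t in Ioi 0, t ^ (-1 - σ) * heatKernel t r
      = ∫ t in Ioi 0, (√(4 * π))⁻¹ * ((|(-1 : ℝ)| * t ^ (-1 - 1 : ℝ)) •
          ((t ^ (-1 : ℝ)) ^ (1 / 2 + σ - 1) * exp (-(r ^ 2 / 4 * t ^ (-1 : ℝ))))) := by
        refine setIntegral_congr_fun measurableSet_Ioi fun t (ht : 0 < t) => ?_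
        have hexponent : t ^ (-1 - σ) * t ^ (-1 / 2 : ℝ)
            = t ^ (-1 - 1 : ℝ) * t ^ (-1 * (1 / 2 + σ - 1)) := by
          rw [← rpow_add ht, ← rpow_add ht]
          ring_nf
        rw [heatKernel_eq_mul_rpow_mul_exp ht, ← rpow_mul ht.le, smul_eq_mul, abs_neg, abs_one]
        linear_combination (√(4 * π))⁻¹ * exp (-(r ^ 2 / 4 * t ^ (-1 : ℝ))) * hexponent
    _ = subordinationConst σ * |r| ^ (-1 - 2 * σ) := by
        rw [integral_const_mul, heuler, hpow, subordinationConst]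
        linear_combination |r| ^ (-1 - 2 * σ) * Gamma (1 / 2 + σ) * hsqrt

lemma integrableOn_rpow_mul_heatKernel (hσ : -1 / 2 < σ) {r : ℝ} (hr : r ≠ 0) :
    IntegrableOn (fun t => t ^ (-1 - σ) * heatKernel t r) (Ioi 0) := by
  refine Integrable.of_integral_ne_zero ?_
  have := subordinationConst_pos hσ
  rw [integral_rpow_mul_heatKernel hσ hr]
  positivity

lemma ae_sub_ne_zero (x : ℝ) : ∀ᵐ y : ℝ, x - y ≠ 0 := by
  filter_upwards [Measure.ae_ne volume x] with y hy using sub_ne_zero.2 hy.symm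

variable {φ : ℝ → ℝ} {x : ℝ}

lemma integrable_prod_rpow_mul_heatKernel (hσ : -1 / 2 < σ) (hφ : Measurable φ)
    (hint : Integrable fun y => φ y * |x - y| ^ (-1 - 2 * σ)) :
    Integrable (Function.uncurry fun y t => φ y * (t ^ (-1 - σ) * heatKernel t (x - y)))
      (volume.prod (volume.restrict (Ioi 0))) := by
  have hmeas : Measurable
      (Function.uncurry fun y t => φ y * (t ^ (-1 - σ) * heatKernel t (x - y))) := by
    have := measurable_heatKernel.comp (by fun_prop : Measurable fun z : ℝ × ℝ => (z.2, x - z.1))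
    exact (hφ.comp measurable_fst).mul (Measurable.mul (by fun_prop) this)
  rw [integrable_prod_iff hmeas.aestronglyMeasurable]
  refine ⟨?_, (hint.norm.const_mul (subordinationConst σ)).congr ?_⟩
  · filter_upwards [ae_sub_ne_zero x] with y hy
    exact (integrableOn_rpow_mul_heatKernel hσ hy).const_mul (φ y)
  · filter_upwards [ae_sub_ne_zero x] with y hy
    have hnorm : ∀ t ∈ Ioi (0 : ℝ), ‖φ y * (t ^ (-1 - σ) * heatKernel t (x - y))‖
        = ‖φ y‖ * (t ^ (-1 - σ) * heatKernel t (x - y)) := fun t ht => by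
      rw [norm_mul, norm_of_nonneg (mul_nonneg (rpow_nonneg (le_of_lt ht) _)
        (heatKernel_nonneg _ _))]
    simp only [Function.uncurry_apply_pair]
    rw [setIntegral_congr_fun measurableSet_Ioi hnorm, integral_const_mul,
      integral_rpow_mul_heatKernel hσ hy, norm_mul,
      norm_of_nonneg (rpow_nonneg (abs_nonneg (x - y)) _)]
    ring

lemma integral_mul_rpow_mul_heatKernel (hφ : Measurable φ) {t : ℝ} (ht : 0 < t) :
    ∫ y, φ y * (t ^ (-1 - σ) * heatKernel t (x - y)) = t ^ (-1 - σ) * heatSemigroup φ t x := by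
  rw [heatSemigroup_eq_integral_heatKernel hφ ht, ← integral_const_mul]
  congr 1 with y
  ring

lemma integrableOn_rpow_mul_heatSemigroup (hσ : -1 / 2 < σ) (hφ : Measurable φ)
    (hint : Integrable fun y => φ y * |x - y| ^ (-1 - 2 * σ)) :
    IntegrableOn (fun t => t ^ (-1 - σ) * heatSemigroup φ t x) (Ioi 0) :=
  IntegrableOn.congr_fun (integrable_prod_rpow_mul_heatKernel hσ hφ hint).integral_prod_right
    (fun _ ht => integral_mul_rpow_mul_heatKernel hφ ht) measurableSet_Ioi

lemma integral_rpow_mul_heatSemigroup (hσ : -1 / 2 < σ) (hφ : Measurable φ)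
    (hint : Integrable fun y => φ y * |x - y| ^ (-1 - 2 * σ)) :
    ∫ t in Ioi 0, t ^ (-1 - σ) * heatSemigroup φ t x
      = subordinationConst σ * ∫ y, φ y * |x - y| ^ (-1 - 2 * σ) := by
  rw [← setIntegral_congr_fun measurableSet_Ioi
      fun _ ht => integral_mul_rpow_mul_heatKernel (σ := σ) (x := x) hφ ht,
    ← integral_integral_swap (integrable_prod_rpow_mul_heatKernel hσ hφ hint),
    ← integral_const_mul]
  refine integral_congr_ae ?_
  filter_upwards [ae_sub_ne_zero x] with y hy
  rw [integral_const_mul, integral_rpow_mul_heatKernel hσ hy]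
  ring

end Subordination

section RieszPotential

variable {s M : ℝ} {F : ℝ → ℝ}

lemma Usol_eq_integral_mul_rpow (s : ℝ) (F : ℝ → ℝ) (x : ℝ) :
    Usol s F x = Ans s * ∫ y, F y * |x - y| ^ (2 * s - 1) := by
  simp only [Usol, div_eq_mul_inv, ← rpow_neg (abs_nonneg _), neg_sub]

lemma Ans_pos (hs : 0 < s) (hs2 : s < 1 / 2) : 0 < Ans s := by
  have := Gamma_pos_of_pos hs
  have := Gamma_pos_of_pos (sub_pos.2 hs2)
  unfold Ans
  positivity

lemma Gamma_mul_Ans (hs : 0 < s) : Gamma s * Ans s = subordinationConst (-s) := by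
  have := Gamma_pos_of_pos hs
  rw [Ans, subordinationConst, ← sub_eq_add_neg]
  field_simp

lemma integrable_mul_abs_sub_rpow {c : ℝ} (hc : -1 < c) (hc0 : c ≤ 0) (hF : Measurable F)
    (hFi : Integrable F) (hM : ∀ x, |F x| ≤ M) (x : ℝ) :
    Integrable (fun y => F y * |x - y| ^ c) := by
  have hsplit := integrable_splitRpow_abs_sub (b := -2) hc (by norm_num) x
  refine ((hsplit.const_mul M).add hFi.abs).mono' (Measurable.aestronglyMeasurable (by fun_prop))
    (Eventually.of_forall fun y => ?_)
  rw [norm_mul, norm_of_nonneg (rpow_nonneg (abs_nonneg _) _)]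
  calc |F y| * |x - y| ^ c ≤ |F y| * (splitRpow c (-2) |x - y| + 1) := by
        gcongr
        exact rpow_le_splitRpow_add_one (abs_nonneg _) hc0
    _ ≤ M * splitRpow c (-2) |x - y| + |F y| := by
        rw [mul_add, mul_one]
        gcongr
        · exact splitRpow_nonneg (abs_nonneg _)
        · exact hM y

lemma Gamma_mul_Usol (hs : 0 < s) (hs2 : s < 1 / 2) (hF : Measurable F) (hFi : Integrable F)
    (hM : ∀ x, |F x| ≤ M) (x : ℝ) :
    Gamma s * Usol s F x = weylIntegral s (fun τ => heatSemigroup F τ x) 0 := by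
  have hint := integrable_mul_abs_sub_rpow (c := -1 - 2 * -s) (by linarith) (by linarith) hF hFi
    hM x
  have hsub := integral_rpow_mul_heatSemigroup (by linarith) hF hint
  rw [show -1 - 2 * -s = 2 * s - 1 by ring, show -1 - -s = s - 1 by ring] at hsub
  rw [Usol_eq_integral_mul_rpow, ← mul_assoc, Gamma_mul_Ans hs, ← hsub]
  simp only [weylIntegral, add_zero, mul_comm]

lemma integrableOn_splitRpow_mul_rpow (hs : 0 < s) (hs2 : s < 1 / 2) :
    IntegrableOn (fun τ => splitRpow 0 (-1 / 2) τ * τ ^ (s - 1)) (Ioi 0) := by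
  refine (integrableOn_splitRpow (a := s - 1 + 0) (b := s - 1 + -1 / 2) (by linarith)
    (by linarith)).congr_fun (fun τ hτ => ?_) measurableSet_Ioi
  rw [← rpow_mul_splitRpow _ hτ, mul_comm]

lemma norm_heatSemigroup_mul_rpow_le (hF : Measurable F) (hFi : Integrable F)
    (hM : ∀ x, |F x| ≤ M) {τ : ℝ} (hτ : 0 < τ) (x : ℝ) :
    ‖heatSemigroup F τ x * τ ^ (s - 1)‖
      ≤ (M + ∫ y, |F y|) * (splitRpow 0 (-1 / 2) τ * τ ^ (s - 1)) := by
  rw [norm_mul, norm_of_nonneg (rpow_nonneg hτ.le _), ← mul_assoc]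
  gcongr
  exact abs_heatSemigroup_le_splitRpow hF hFi hM hτ x

lemma abs_Usol_le (hs : 0 < s) (hs2 : s < 1 / 2) (hF : Measurable F) (hFi : Integrable F)
    (hM : ∀ x, |F x| ≤ M) (x : ℝ) :
    |Usol s F x| ≤ (Gamma s)⁻¹ * (∫ τ in Ioi 0, splitRpow 0 (-1 / 2) τ * τ ^ (s - 1))
      * (M + ∫ y, |F y|) := by
  have hΓ := Gamma_pos_of_pos hs
  have hbound : |weylIntegral s (fun τ => heatSemigroup F τ x) 0|
      ≤ (M + ∫ y, |F y|) * ∫ τ in Ioi 0, splitRpow 0 (-1 / 2) τ * τ ^ (s - 1) := by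
    rw [← integral_const_mul, ← norm_eq_abs]
    refine norm_integral_le_of_norm_le ((integrableOn_splitRpow_mul_rpow hs hs2).const_mul _) ?_
    filter_upwards [ae_restrict_mem measurableSet_Ioi] with τ hτ
    rw [add_zero]
    exact norm_heatSemigroup_mul_rpow_le hF hFi hM hτ x
  rw [← Gamma_mul_Usol hs hs2 hF hFi hM, abs_mul, abs_of_pos hΓ] at hbound
  rw [mul_assoc, ← div_eq_inv_mul, le_div_iff₀' hΓ]
  linarith

lemma tendsto_Usol_cocompact (hs : 0 < s) (hs2 : s < 1 / 2) (hF : Measurable F)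
    (hFi : Integrable F) (hM : ∀ x, |F x| ≤ M) : Tendsto (Usol s F) (cocompact ℝ) (𝓝 0) := by
  have := isCountablyGenerated_cocompact_real
  have hΓ := Gamma_pos_of_pos hs
  have hlim : Tendsto (fun x => weylIntegral s (fun τ => heatSemigroup F τ x) 0) (cocompact ℝ)
      (𝓝 (∫ _ in Ioi (0 : ℝ), (0 : ℝ))) := by
    refine tendsto_integral_filter_of_dominated_convergence _ (Eventually.of_forall fun x => ?_)
      (Eventually.of_forall fun x => ?_)
      ((integrableOn_splitRpow_mul_rpow hs hs2).const_mul (M + ∫ y, |F y|)) ?_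
    · have := measurable_heatSemigroup hF
      exact Measurable.aestronglyMeasurable (by fun_prop)
    · filter_upwards [ae_restrict_mem measurableSet_Ioi] with τ hτ
      rw [add_zero]
      exact norm_heatSemigroup_mul_rpow_le hF hFi hM hτ x
    · filter_upwards [ae_restrict_mem measurableSet_Ioi] with τ hτ
      simpa using (tendsto_heatSemigroup_cocompact hF hFi hτ).mul_const (τ ^ (s - 1))
  simp only [← Gamma_mul_Usol hs hs2 hF hFi hM, integral_zero] at hlim
  simpa [hΓ.ne'] using hlim.const_mul (Gamma s)⁻¹

lemma Gamma_mul_heatSemigroup_Usol (hs : 0 < s) (hs2 : s < 1 / 2) (hF : Measurable F)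
    (hFi : Integrable F) (hM : ∀ x, |F x| ≤ M) {t : ℝ} (ht : 0 ≤ t) (x : ℝ) :
    Gamma s * heatSemigroup (Usol s F) t x = weylIntegral s (fun τ => heatSemigroup F τ x) t := by
  have hprod : Integrable
      (Function.uncurry fun w τ => heatSemigroup F τ (x + √(2 * t) * w) * τ ^ (s - 1))
      ((gaussianReal 0 1).prod (volume.restrict (Ioi 0))) := by
    refine ((integrable_const (1 : ℝ)).mul_prod
      ((integrableOn_splitRpow_mul_rpow hs hs2).const_mul (M + ∫ y, |F y|))).mono' ?_ ?_
    · have := (measurable_heatSemigroup hF).comp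
        (by fun_prop : Measurable fun z : ℝ × ℝ => (z.2, x + √(2 * t) * z.1))
      exact (this.mul (by fun_prop)).aestronglyMeasurable
    · filter_upwards [Measure.quasiMeasurePreserving_snd.ae (ae_restrict_mem measurableSet_Ioi)]
        with z hz
      rw [one_mul]
      exact norm_heatSemigroup_mul_rpow_le hF hFi hM hz _
  calc Gamma s * heatSemigroup (Usol s F) t x
      = ∫ w, (∫ τ in Ioi 0, heatSemigroup F τ (x + √(2 * t) * w) * τ ^ (s - 1))
          ∂gaussianReal 0 1 := by
        rw [heatSemigroup, ← integral_const_mul]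
        simp only [Gamma_mul_Usol hs hs2 hF hFi hM, weylIntegral, add_zero]
    _ = ∫ τ in Ioi 0, heatSemigroup (heatSemigroup F τ) t x * τ ^ (s - 1) := by
        rw [integral_integral_swap hprod]
        simp only [integral_mul_const, heatSemigroup]
    _ = weylIntegral s (fun τ => heatSemigroup F τ x) t :=
        setIntegral_congr_fun measurableSet_Ioi fun τ hτ => by
          simp only [heatSemigroup_heatSemigroup hF hM ht (le_of_lt hτ)]

end RieszPotential

/-- The moment `∫ |w|^a ||1-w|^c - |w|^c| dw` of the difference of two translates of the Riesz
kernel `|·|^c`; it is the constant in the Hölder estimate for Riesz potentials. -/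
noncomputable def rieszMoment (a c : ℝ) : ℝ := ∫ w : ℝ, |w| ^ a * |(|1 - w| ^ c - |w| ^ c)|

section HolderEstimate

variable {a c : ℝ}

lemma rieszMoment_nonneg (a c : ℝ) : 0 ≤ rieszMoment a c :=
  integral_nonneg fun _ => by positivity

lemma abs_rpow_sub_rpow_le (hc : c ≤ 1) {r u v : ℝ} (hr : 0 < r) (hu : r ≤ u) (hv : r ≤ v) :
    |u ^ c - v ^ c| ≤ |c| * r ^ (c - 1) * |u - v| := by
  refine (convex_Ici r).norm_image_sub_le_of_norm_hasDerivWithin_le (f := fun z => z ^ c)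
    (f' := fun z => c * z ^ (c - 1)) (fun z hz => ?_) (fun z hz => ?_) hv hu
  · exact (hasDerivAt_rpow_const (Or.inl (hr.trans_le hz).ne')).hasDerivWithinAt
  · rw [norm_mul, norm_of_nonneg (rpow_nonneg (hr.le.trans hz) _)]
    exact mul_le_mul_of_nonneg_left (rpow_le_rpow_of_nonpos hr hz (sub_nonpos.2 hc)) (norm_nonneg c)

lemma abs_abs_one_sub_rpow_sub_le (hc : c ≤ 1) {w : ℝ} (hw : 2 ≤ |w|) :
    |(|1 - w| ^ c - |w| ^ c)| ≤ |c| * 2 ^ (1 - c) * |w| ^ (c - 1) := by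
  have hsub : |(|1 - w| - |w|)| ≤ 1 := by
    simpa [abs_sub_comm 1 w] using abs_abs_sub_abs_le_abs_sub (w - 1) w
  have hhalf : |w| / 2 ≤ |1 - w| := by linarith [(abs_le.1 hsub).1]
  calc |(|1 - w| ^ c - |w| ^ c)| ≤ |c| * (|w| / 2) ^ (c - 1) * |(|1 - w| - |w|)| :=
        abs_rpow_sub_rpow_le hc (by linarith) hhalf (by linarith)
    _ ≤ |c| * (|w| / 2) ^ (c - 1) := mul_le_of_le_one_right (by positivity) hsub
    _ = |c| * 2 ^ (1 - c) * |w| ^ (c - 1) := by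
        rw [div_rpow (abs_nonneg w) zero_le_two, div_eq_mul_inv, ← rpow_neg zero_le_two, neg_sub]
        ring

lemma integrableOn_abs_sub_rpow (hc : -1 < c) (hc0 : c ≤ 0) {K : Set ℝ} (hK : MeasurableSet K)
    (hK' : volume K ≠ ⊤) (x : ℝ) : IntegrableOn (fun w => |x - w| ^ c) K := by
  have h := integrable_mul_abs_sub_rpow (F := K.indicator fun _ => 1) (M := 1) hc hc0
    (measurable_const.indicator hK) ((integrable_indicator_iff hK).2 (by simpa using hK'.lt_top))
    (fun w => by by_cases hw : w ∈ K <;> simp [hw]) x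
  refine (integrable_indicator_iff hK).1 (h.congr (Eventually.of_forall fun w => ?_))
  by_cases hw : w ∈ K <;> simp [hw]

lemma integrable_rieszMoment (ha : 0 ≤ a) (hc : -1 < c) (hac : a + c < 0) :
    Integrable (fun w : ℝ => |w| ^ a * |(|1 - w| ^ c - |w| ^ c)|) := by
  have hc0 : c ≤ 0 := by linarith
  have hnear : IntegrableOn (fun w : ℝ => |w| ^ a * |(|1 - w| ^ c - |w| ^ c)|) (Icc (-2) 2) := by
    have hone := integrableOn_abs_sub_rpow hc hc0 (K := Icc (-2) 2) measurableSet_Icc (by simp) 1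
    have hzero := integrableOn_abs_sub_rpow hc hc0 (K := Icc (-2) 2) measurableSet_Icc (by simp) 0
    simp only [zero_sub, abs_neg] at hzero
    exact IntegrableOn.continuousOn_mul
      (continuous_abs.rpow_const fun _ => Or.inr ha).continuousOn (hone.sub hzero).abs isCompact_Icc
  have hfar : IntegrableOn (fun w : ℝ => |w| ^ a * |(|1 - w| ^ c - |w| ^ c)|) (Icc (-2) 2)ᶜ := by
    have htail := integrable_splitRpow_abs_sub (a := 0) (b := a + c - 1) (by norm_num)
      (by linarith) 0
    refine (htail.const_mul (|c| * 2 ^ (1 - c))).integrableOn.mono'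
      (Measurable.aestronglyMeasurable (by fun_prop)) ?_
    filter_upwards [ae_restrict_mem measurableSet_Icc.compl] with w hw
    have hw2 : 2 ≤ |w| := (not_le.1 fun h => hw (abs_le.1 h)).le
    rw [norm_of_nonneg (by positivity), zero_sub, abs_neg, splitRpow, if_neg (by linarith),
      add_sub_assoc, rpow_add (by linarith), mul_left_comm]
    gcongr
    exact abs_abs_one_sub_rpow_sub_le (by linarith) hw2
  rw [← integrableOn_univ, ← union_compl_self (Icc (-2 : ℝ) 2)]
  exact hnear.union hfar

-- The integrand is odd under the reflection exchanging `x` and `y`.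
lemma integral_abs_sub_rpow_sub_abs_sub_rpow (c x y : ℝ) :
    ∫ z, (|x - z| ^ c - |y - z| ^ c) = 0 := by
  have hreflect := integral_sub_left_eq_self (fun z => |x - z| ^ c - |y - z| ^ c) volume (x + y)
  have hodd : ∀ z, |x - (x + y - z)| ^ c - |y - (x + y - z)| ^ c
      = -(|x - z| ^ c - |y - z| ^ c) := by
    intro z
    rw [neg_sub, abs_sub_comm y z, abs_sub_comm x z]
    ring_nf
  simp only [hodd, integral_neg] at hreflect
  linarith

lemma abs_sub_rpow_mul_abs_sub_eq {x y : ℝ} (hxy : x ≠ y) (z : ℝ) :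
    |x - z| ^ a * |(|x - z| ^ c - |y - z| ^ c)| = |x - y| ^ (a + c) *
      (|(z - x) / (y - x)| ^ a * |(|1 - (z - x) / (y - x)| ^ c - |(z - x) / (y - x)| ^ c)|) := by
  have hpos : 0 < |x - y| := abs_pos.2 (sub_ne_zero.2 hxy)
  have hyx : y - x ≠ 0 := sub_ne_zero.2 hxy.symm
  have hx : |x - z| = |x - y| * |(z - x) / (y - x)| := by
    rw [abs_sub_comm x z, abs_sub_comm x y, ← abs_mul, mul_div_cancel₀ _ hyx]
  have hy : |y - z| = |x - y| * |1 - (z - x) / (y - x)| := by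
    rw [abs_sub_comm x y, ← abs_mul, mul_sub, mul_div_cancel₀ _ hyx]
    ring_nf
  rw [hx, hy, mul_rpow hpos.le (abs_nonneg _), mul_rpow hpos.le (abs_nonneg _),
    mul_rpow hpos.le (abs_nonneg _), ← mul_sub, abs_mul, abs_sub_comm (_ ^ c) (_ ^ c),
    abs_of_nonneg (rpow_nonneg hpos.le c), rpow_add hpos]
  ring

lemma integrable_abs_sub_rpow_mul_abs_sub (ha : 0 ≤ a) (hc : -1 < c) (hac : a + c < 0) {x y : ℝ}
    (hxy : x ≠ y) : Integrable fun z => |x - z| ^ a * |(|x - z| ^ c - |y - z| ^ c)| := by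
  simp only [abs_sub_rpow_mul_abs_sub_eq hxy]
  exact (((integrable_rieszMoment ha hc hac).comp_div
    (sub_ne_zero.2 hxy.symm)).comp_sub_right x).const_mul _

lemma integral_abs_sub_rpow_mul_abs_sub {x y : ℝ} (hxy : x ≠ y) :
    ∫ z, |x - z| ^ a * |(|x - z| ^ c - |y - z| ^ c)|
      = rieszMoment a c * |x - y| ^ (a + c + 1) := by
  simp only [abs_sub_rpow_mul_abs_sub_eq hxy]
  rw [integral_const_mul, integral_sub_right_eq_self (fun z => |z / (y - x)| ^ a *
      |(|1 - z / (y - x)| ^ c - |z / (y - x)| ^ c)|) x,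
    Measure.integral_comp_div (fun w => |w| ^ a * |(|1 - w| ^ c - |w| ^ c)|), smul_eq_mul,
    abs_sub_comm y x, rpow_add_one (abs_pos.2 (sub_ne_zero.2 hxy)).ne', rieszMoment]
  ring

variable {F : ℝ → ℝ} {L : ℝ}

-- Since the kernel difference has integral zero, `F z` may be replaced by `F z - F x`.
lemma integral_mul_abs_sub_rpow_sub (hint : ∀ x, Integrable fun z => F z * |x - z| ^ c)
    (hc : -1 < c) (hc0 : c < 0) (x y : ℝ) :
    (∫ z, F z * |x - z| ^ c) - ∫ z, F z * |y - z| ^ c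
      = ∫ z, (F z - F x) * (|x - z| ^ c - |y - z| ^ c) := by
  rcases eq_or_ne x y with rfl | hxy
  · simp
  have hkernel : Integrable fun z => |x - z| ^ c - |y - z| ^ c := by
    have h := integrable_abs_sub_rpow_mul_abs_sub (a := 0) le_rfl hc (by linarith) hxy
    simp only [rpow_zero, one_mul] at h
    exact (integrable_norm_iff (Measurable.aestronglyMeasurable (by fun_prop))).1 h
  have hprod : Integrable fun z => F z * (|x - z| ^ c - |y - z| ^ c) := by
    simp only [mul_sub]
    exact (hint x).sub (hint y)
  simp only [sub_mul (F _) (F x)]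
  rw [integral_sub hprod (hkernel.const_mul _), integral_const_mul,
    integral_abs_sub_rpow_sub_abs_sub_rpow, mul_zero, sub_zero, ← integral_sub (hint x) (hint y)]
  simp only [mul_sub]

lemma abs_integral_mul_abs_sub_rpow_sub_le
    (hint : ∀ x, Integrable fun z => F z * |x - z| ^ c)
    (hL : ∀ x y, |F x - F y| ≤ L * |x - y| ^ a) (ha : 0 ≤ a) (hc : -1 < c) (hac : a + c < 0)
    {x y : ℝ} (hxy : x ≠ y) :
    |(∫ z, F z * |x - z| ^ c) - ∫ z, F z * |y - z| ^ c|
      ≤ L * (rieszMoment a c * |x - y| ^ (a + c + 1)) := by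
  rw [integral_mul_abs_sub_rpow_sub hint hc (by linarith), ← integral_abs_sub_rpow_mul_abs_sub hxy,
    ← integral_const_mul, ← norm_eq_abs]
  refine norm_integral_le_of_norm_le
    ((integrable_abs_sub_rpow_mul_abs_sub ha hc hac hxy).const_mul L)
    (Eventually.of_forall fun z => ?_)
  rw [norm_mul, ← mul_assoc, norm_eq_abs, norm_eq_abs, abs_sub_comm (F z)]
  exact mul_le_mul_of_nonneg_right (hL x z) (abs_nonneg _)

lemma abs_Usol_sub_Usol_le {α s M : ℝ} (hα : 0 ≤ α) (hs : 0 < s) (hsum : α + 2 * s < 1)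
    (hF : Measurable F) (hFi : Integrable F) (hM : ∀ x, |F x| ≤ M)
    (hL : ∀ x y, |F x - F y| ≤ L * |x - y| ^ α) (x y : ℝ) :
    |Usol s F x - Usol s F y|
      ≤ Ans s * rieszMoment α (2 * s - 1) * L * |x - y| ^ (α + 2 * s) := by
  rcases eq_or_ne x y with rfl | hxy
  · simp [zero_rpow (by positivity : α + 2 * s ≠ 0)]
  have hA := Ans_pos hs (by linarith)
  have h := abs_integral_mul_abs_sub_rpow_sub_le
    (integrable_mul_abs_sub_rpow (c := 2 * s - 1) (by linarith) (by linarith) hF hFi hM) hL hα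
    (by linarith) (by linarith) hxy
  rw [show α + (2 * s - 1) + 1 = α + 2 * s by ring] at h
  rw [Usol_eq_integral_mul_rpow, Usol_eq_integral_mul_rpow, ← mul_sub, abs_mul, abs_of_pos hA]
  calc _ ≤ Ans s * (L * (rieszMoment α (2 * s - 1) * |x - y| ^ (α + 2 * s))) := by gcongr
    _ = _ := by ring

end HolderEstimate

section Inversion

variable {s M B β L : ℝ} {F U : ℝ → ℝ}

lemma continuous_of_dist_le_mul_rpow {X Y : Type*} [PseudoMetricSpace X] [PseudoMetricSpace Y]
    {f : X → Y} (hβ : 0 < β) (hf : ∀ x y, dist (f x) (f y) ≤ L * dist x y ^ β) :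
    Continuous f := by
  refine continuous_iff_continuousAt.2 fun x => tendsto_iff_dist_tendsto_zero.2 ?_
  have hcont : Continuous fun y => L * dist y x ^ β :=
    continuous_const.mul ((continuous_id.dist continuous_const).rpow_const fun _ => Or.inr hβ.le)
  exact squeeze_zero (fun _ => dist_nonneg) (fun y => hf y x)
    (hcont.tendsto' x 0 (by simp [zero_rpow hβ.ne']))

lemma integrable_sub_mul_abs_sub_rpow (hs : 0 < s) (hβ : 2 * s < β) (hUm : Measurable U)
    (hB : ∀ x, |U x| ≤ B) (hL : ∀ x y, |U x - U y| ≤ L * |x - y| ^ β) (x : ℝ) :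
    Integrable fun y => (U x - U y) * |x - y| ^ (-1 - 2 * s) := by
  have hB0 : 0 ≤ B := (abs_nonneg _).trans (hB 0)
  have hL0 : 0 ≤ L := by simpa using (abs_nonneg _).trans (hL 0 1)
  refine ((integrable_splitRpow_abs_sub (a := -1 - 2 * s + β) (b := -1 - 2 * s + 0) (by linarith)
    (by linarith) x).const_mul (L + 2 * B)).mono' (Measurable.aestronglyMeasurable (by fun_prop)) ?_
  filter_upwards [ae_sub_ne_zero x] with y hy
  have hpos : 0 < |x - y| := abs_pos.2 hy
  have hdiff : |U x - U y| ≤ (L + 2 * B) * splitRpow β 0 |x - y| := by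
    unfold splitRpow
    split_ifs
    · exact (hL x y).trans (by gcongr; linarith)
    · rw [rpow_zero]
      linarith [abs_sub (U x) (U y), hB x, hB y]
  rw [norm_mul, norm_of_nonneg (rpow_nonneg hpos.le _), norm_eq_abs,
    ← rpow_mul_splitRpow _ hpos, mul_left_comm, mul_comm]
  gcongr

lemma Gamma_div_mul_As (hs : 0 < s) (hs1 : s < 1) :
    Gamma (1 - s) / s * As s = subordinationConst s := by
  have := Gamma_pos_of_pos (sub_pos.2 hs1)
  rw [As, subordinationConst]
  field_simp

lemma Gamma_mul_heatSemigroup_Usol_sub_Usol (hs : 0 < s) (hs2 : s < 1 / 2) (hF : Measurable F)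
    (hFi : Integrable F) (hM : ∀ x, |F x| ≤ M) (hU : Measurable (Usol s F)) {t : ℝ} (ht : 0 ≤ t)
    (x : ℝ) :
    Gamma s * heatSemigroup (fun y => Usol s F x - Usol s F y) t x
      = weylIntegral s (fun τ => heatSemigroup F τ x) 0
        - weylIntegral s (fun τ => heatSemigroup F τ x) t := by
  rw [heatSemigroup_const_sub _ hU (abs_Usol_le hs hs2 hF hFi hM), mul_sub,
    Gamma_mul_Usol hs hs2 hF hFi hM, Gamma_mul_heatSemigroup_Usol hs hs2 hF hFi hM ht]

lemma As_mul_integral_Usol_sub (hs : 0 < s) (hs2 : s < 1 / 2) (hF : Continuous F)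
    (hFi : Integrable F) (hM : ∀ x, |F x| ≤ M) (hU : Measurable (Usol s F)) {x : ℝ}
    (hint : Integrable fun y => (Usol s F x - Usol s F y) * |x - y| ^ (-1 - 2 * s)) :
    As s * ∫ y, (Usol s F x - Usol s F y) * |x - y| ^ (-1 - 2 * s) = F x := by
  have hσ : -1 / 2 < s := by linarith
  have hΓ := Gamma_pos_of_pos hs
  have hΓ' : 0 < Gamma (1 - s) / s := div_pos (Gamma_pos_of_pos (by linarith)) hs
  have hφ : Measurable fun y => Usol s F x - Usol s F y := measurable_const.sub hU
  set p : ℝ → ℝ := fun τ => heatSemigroup F τ x with hp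
  have hweyl : ∀ t ∈ Ioi (0 : ℝ), t ^ (-1 - s) * (weylIntegral s p 0 - weylIntegral s p t)
      = Gamma s * (t ^ (-1 - s) * heatSemigroup (fun y => Usol s F x - Usol s F y) t x) := by
    intro t ht
    rw [hp, ← Gamma_mul_heatSemigroup_Usol_sub_Usol hs hs2 hF.measurable hFi hM hU (le_of_lt ht),
      mul_left_comm]
  have hanti : AntitoneOn (fun τ => (M + ∫ y, |F y|) * splitRpow 0 (-1 / 2) τ) (Ici 0) :=
    fun τ hτ τ' hτ' h => mul_le_mul_of_nonneg_left
      (antitoneOn_splitRpow_zero (by norm_num) hτ hτ' h)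
      (add_nonneg ((abs_nonneg _).trans (hM 0)) (integral_nonneg fun _ => abs_nonneg _))
  have hmajorant : IntegrableOn
      (fun τ => (M + ∫ y, |F y|) * splitRpow 0 (-1 / 2) τ * τ ^ (s - 1)) (Ioi 0) := by
    simpa only [mul_assoc, IntegrableOn] using (integrableOn_splitRpow_mul_rpow hs hs2).const_mul _
  have hintegrable : IntegrableOn
      (fun t => t ^ (-1 - s) * (weylIntegral s p 0 - weylIntegral s p t)) (Ioi 0) :=
    IntegrableOn.congr_fun ((integrableOn_rpow_mul_heatSemigroup hσ hφ hint).const_mul _)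
      (fun t ht => (hweyl t ht).symm) measurableSet_Ioi
  have hmarchaud := integral_marchaud hs (by linarith)
    (measurable_heatSemigroup hF.measurable).of_uncurry_right
    (fun τ hτ => abs_heatSemigroup_le_splitRpow hF.measurable hFi hM hτ x) hanti hmajorant
    ((tendsto_heatSemigroup_zero hF hM x).mono_left nhdsWithin_le_nhds) hintegrable
  rw [setIntegral_congr_fun measurableSet_Ioi hweyl, integral_const_mul,
    integral_rpow_mul_heatSemigroup hσ hφ hint, ← Gamma_div_mul_As hs (by linarith), mul_assoc,
    mul_assoc, mul_right_inj' hΓ.ne', mul_right_inj' hΓ'.ne'] at hmarchaud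
  rw [hmarchaud, heatSemigroup_zero]

end Inversion

section FiniteMeasureSupport

variable {X E : Type*} [MeasurableSpace X] [NormedAddCommGroup E] {μ : Measure X} {S : Set X}
  {F : X → E} {M : ℝ}

lemma integrable_of_norm_le_of_forall_notMem_eq_zero (hF : AEStronglyMeasurable F μ)
    (hS : μ S ≠ ⊤) (hM : ∀ x, ‖F x‖ ≤ M) (hsupp : ∀ x ∉ S, F x = 0) : Integrable F μ :=
  (integrableOn_iff_integrable_of_support_subset (Function.support_subset_iff'.2 hsupp)).1
    (IntegrableOn.of_bound hS.lt_top hF.restrict M (Eventually.of_forall hM))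

lemma integral_norm_le_of_forall_notMem_eq_zero (hS : μ S ≠ ⊤) (hM : ∀ x, ‖F x‖ ≤ M)
    (hsupp : ∀ x ∉ S, F x = 0) : ∫ x, ‖F x‖ ∂μ ≤ μ.real S * M := by
  rw [← setIntegral_eq_integral_of_forall_compl_eq_zero fun x hx => by rw [hsupp x hx, norm_zero],
    mul_comm]
  exact (le_norm_self _).trans (norm_setIntegral_le_of_norm_le_const hS.lt_top fun x _ => by
    simpa using hM x)

end FiniteMeasureSupport

theorem continuous_Poisson_problem_general (α s K : ℝ) (hα0 : 0 < α) (hs0 : 0 < s)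
    (hsum : α + 2 * s < 1) :
    ∃ C : ℝ, 0 < C ∧ ∀ F : ℝ → ℝ, ∀ MF LF : ℝ,
      (∀ x : ℝ, |F x| ≤ MF) →
      (∀ x y : ℝ, |F x - F y| ≤ LF * |x - y| ^ α) →
      Integrable F →
      ∫ x, |F x| ≤ K * MF →
      Tendsto (Usol s F) (cocompact ℝ) (𝓝 0) ∧
      (∀ x : ℝ, |Usol s F x| ≤ C * (MF + LF)) ∧
      (∀ x y : ℝ, |Usol s F x - Usol s F y| ≤ C * (MF + LF) * |x - y| ^ (α + 2 * s)) ∧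
      (∀ x : ℝ,
        Integrable (fun y : ℝ => (Usol s F x - Usol s F y) / |x - y| ^ (1 + 2 * s)) ∧
        As s * ∫ y : ℝ, (Usol s F x - Usol s F y) / |x - y| ^ (1 + 2 * s) = F x) := by
  have hs2 : s < 1 / 2 := by linarith
  set A := (Gamma s)⁻¹ * (∫ τ in Ioi 0, splitRpow 0 (-1 / 2) τ * τ ^ (s - 1))
  set H := Ans s * rieszMoment α (2 * s - 1)
  have hA0 : 0 ≤ A := mul_nonneg (inv_nonneg.2 (Gamma_pos_of_pos hs0).le)
    (setIntegral_nonneg measurableSet_Ioi fun τ hτ =>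
      mul_nonneg (splitRpow_nonneg (le_of_lt hτ)) (rpow_nonneg (le_of_lt hτ) _))
  have hH0 : 0 ≤ H := mul_nonneg (Ans_pos hs0 hs2).le (rieszMoment_nonneg _ _)
  refine ⟨A * (1 + |K|) + H + 1, by positivity, fun F MF LF hM hL hFi hK => ?_⟩
  have hMF : 0 ≤ MF := (abs_nonneg _).trans (hM 0)
  have hLF : 0 ≤ LF := by simpa using (abs_nonneg _).trans (hL 0 1)
  have hF : Continuous F := continuous_of_dist_le_mul_rpow hα0 hL
  have hbound := abs_Usol_le hs0 hs2 hF.measurable hFi hM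
  have hholder := abs_Usol_sub_Usol_le hα0.le hs0 hsum hF.measurable hFi hM hL
  have hU : Continuous (Usol s F) := continuous_of_dist_le_mul_rpow (by positivity) hholder
  refine ⟨tendsto_Usol_cocompact hs0 hs2 hF.measurable hFi hM, fun x => ?_, fun x y => ?_,
    fun x => ?_⟩
  · have hKM : K * MF ≤ |K| * MF := mul_le_mul_of_nonneg_right (le_abs_self K) hMF
    calc |Usol s F x| ≤ A * (MF + ∫ y, |F y|) := hbound x
      _ ≤ A * (MF + |K| * MF) := by gcongr; exact hK.trans hKM
      _ = A * (1 + |K|) * MF := by ring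
      _ ≤ (A * (1 + |K|) + H + 1) * (MF + LF) := by gcongr <;> linarith
  · refine (hholder x y).trans ?_
    have : 0 ≤ A * (1 + |K|) := by positivity
    gcongr <;> linarith
  · have hint := integrable_sub_mul_abs_sub_rpow hs0 (by linarith) hU.measurable hbound hholder x
    simp only [div_eq_mul_inv, ← rpow_neg (abs_nonneg _), neg_add']
    exact ⟨hint, As_mul_integral_Usol_sub hs0 hs2 hF hFi hM hU.measurable hint⟩

end PoissonProblem

/-- The continuous Poisson problem `(-Δ)^s U = F` on `ℝ`:
(1) `U = (-Δ)^{-s}F` vanishes at infinity; (2) `U` is bounded, `(α+2s)`-Hölder and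
`‖U‖_∞ + [U]_{C^{0,α+2s}} ≤ C (‖F‖_∞ + [F]_{C^{0,α}})` with `C = C(s,α,R₀)`;
(3) `(-Δ)^s U(x)` is given by an absolutely convergent integral which equals `F(x)`. -/
theorem continuous_Poisson_problem (α s R₀ : ℝ)
    (hα0 : 0 < α) (hα1 : α < 1) (hs0 : 0 < s) (hs1 : s < 1)
    (hsum : α + 2 * s < 1) (hR₀ : 0 < R₀) :
    ∃ C : ℝ, 0 < C ∧ ∀ F : ℝ → ℝ, ∀ MF LF : ℝ,
      (∀ x : ℝ, |F x| ≤ MF) →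
      (∀ x y : ℝ, |F x - F y| ≤ LF * |x - y| ^ α) →
      (∀ x : ℝ, x ∉ Set.Ioo (-R₀) R₀ → F x = 0) →
      Filter.Tendsto (Usol s F) (Filter.cocompact ℝ) (nhds 0) ∧
      (∀ x : ℝ, |Usol s F x| ≤ C * (MF + LF)) ∧
      (∀ x y : ℝ, |Usol s F x - Usol s F y| ≤ C * (MF + LF) * |x - y| ^ (α + 2 * s)) ∧
      (∀ x : ℝ,
        Integrable (fun y : ℝ => (Usol s F x - Usol s F y) / |x - y| ^ (1 + 2 * s)) ∧
        As s * ∫ y : ℝ, (Usol s F x - Usol s F y) / |x - y| ^ (1 + 2 * s) = F x) := by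
  obtain ⟨C, hC, h⟩ := continuous_Poisson_problem_general α s (volume.real (Set.Ioo (-R₀) R₀))
    hα0 hs0 hsum
  exact ⟨C, hC, fun F MF LF hM hL hsupp => h F MF LF hM hL
    (integrable_of_norm_le_of_forall_notMem_eq_zero
      (continuous_of_dist_le_mul_rpow hα0 hL).aestronglyMeasurable measure_Ioo_lt_top.ne hM
      hsupp)
    (integral_norm_le_of_forall_notMem_eq_zero measure_Ioo_lt_top.ne hM hsupp)⟩
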